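/- For the IMH chain on the finite state space X = {1, …, m}, assume additionally that w₁ > 1 (equivalently π ≠ p). Then for every state i, the convergence rate at i exists and equals 1 − 1/w₁, i.e. lim_{t→∞} ‖P^t(i,·) − π‖_TV^{1/t} = 1 − 1/w₁. -/

import Mathlib

/-- The IMH transition matrix on a finite state space, for target pmf `tgt` and proposal
pmf `prp`: `P(i,j) = p_j·min(1, w_j/w_i)` for `j ≠ i` and
`P(i,i) = p_i + Σ_k p_k·max(0, 1 − w_k/w_i)`, where `w_i = π_i/p_i`. -/
noncomputable def imhMatrix {n : ℕ} (tgt prp : Fin n → ℝ) : Matrix (Fin n) (Fin n) ℝ :=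
  Matrix.of fun i j =>
    if j = i then prp i + ∑ k, prp k * max 0 (1 - (tgt k / prp k) / (tgt i / prp i))
    else prp j * min 1 ((tgt j / prp j) / (tgt i / prp i))

/-- Total variation distance between two pmfs on a finite state space. -/
noncomputable def tvFin {n : ℕ} (μ ν : Fin n → ℝ) : ℝ := (1 / 2) * ∑ j, |μ j - ν j|

lemma imh_aux_rpow (c r : ℝ) (hc : 0 < c) (hr : 0 < r) :
    Filter.Tendsto (fun t : ℕ => (c * r ^ t) ^ ((t : ℝ)⁻¹)) Filter.atTop (nhds r) := by
  have h1 : Filter.Tendsto (fun t : ℕ => c ^ ((t : ℝ)⁻¹) * r) Filter.atTop (nhds (c ^ (0 : ℝ) * r)) := by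
    apply Filter.Tendsto.mul_const
    exact ((Real.continuous_const_rpow hc.ne').tendsto 0).comp tendsto_inv_atTop_nhds_zero_nat
  rw [Real.rpow_zero, one_mul] at h1
  refine h1.congr' ?_
  filter_upwards [Filter.eventually_ne_atTop 0] with t ht
  rw [Real.mul_rpow hc.le (pow_nonneg hr.le t), Real.pow_rpow_inv_natCast hr.le ht]

lemma imh_aux_apply {n : ℕ} (tgt prp : Fin n → ℝ)
    (ht : ∀ i, 0 < tgt i) (hp : ∀ i, 0 < prp i) (i j : Fin n) :
    imhMatrix tgt prp i j = prp j * min 1 ((tgt j / prp j) / (tgt i / prp i)) +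
      if j = i then ∑ k, prp k * max 0 (1 - (tgt k / prp k) / (tgt i / prp i)) else 0 := by
  unfold imhMatrix
  rw [Matrix.of_apply]
  split_ifs with h
  · subst h
    rw [div_self (div_pos (ht j) (hp j)).ne']
    simp
  · simp

lemma imh_aux_row {n : ℕ} (tgt prp : Fin n → ℝ)
    (ht : ∀ i, 0 < tgt i) (hp : ∀ i, 0 < prp i) (hs : ∑ i, prp i = 1) (i : Fin n) :
    ∑ j, imhMatrix tgt prp i j = 1 := by
  simp_rw [imh_aux_apply tgt prp ht hp]
  rw [Finset.sum_add_distrib, Finset.sum_ite_eq' Finset.univ i, if_pos (Finset.mem_univ i),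
    ← Finset.sum_add_distrib]
  refine Eq.trans ?_ hs
  refine Finset.sum_congr rfl fun k _ => ?_
  rcases le_total 1 ((tgt k / prp k) / (tgt i / prp i)) with h | h
  · rw [min_eq_left h, max_eq_left (by linarith)]; ring
  · rw [min_eq_right h, max_eq_right (by linarith)]; ring

lemma imh_aux_bal {n : ℕ} (tgt prp : Fin n → ℝ)
    (ht : ∀ i, 0 < tgt i) (hp : ∀ i, 0 < prp i) (i j : Fin n) :
    tgt i * imhMatrix tgt prp i j = tgt j * imhMatrix tgt prp j i := by
  have key : ∀ a b : Fin n, tgt a * (prp b * min 1 ((tgt b / prp b) / (tgt a / prp a))) =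
      min (tgt a * prp b) (tgt b * prp a) := by
    intro a b
    have h1 := ht a
    have h2 := hp a
    have h3 := hp b
    rw [← mul_assoc, mul_min_of_nonneg _ _ (mul_pos h1 h3).le]
    congr 1
    · ring
    · field_simp
  by_cases h : j = i
  · subst h; rfl
  · rw [imh_aux_apply tgt prp ht hp, imh_aux_apply tgt prp ht hp, if_neg h, if_neg (Ne.symm h),
      add_zero, add_zero, key, key, min_comm]

lemma imh_aux_stat {n : ℕ} (tgt prp : Fin n → ℝ)
    (ht : ∀ i, 0 < tgt i) (hp : ∀ i, 0 < prp i) (hs : ∑ i, prp i = 1) (j : Fin n) :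
    ∑ i, tgt i * imhMatrix tgt prp i j = tgt j := by
  simp_rw [fun i => imh_aux_bal tgt prp ht hp i j]
  rw [← Finset.mul_sum, imh_aux_row tgt prp ht hp hs, mul_one]

lemma imh_aux_pow_row {n : ℕ} (P : Matrix (Fin n) (Fin n) ℝ) (h : ∀ i, ∑ j, P i j = 1)
    (t : ℕ) (i : Fin n) : ∑ j, (P ^ t) i j = 1 := by
  induction t with
  | zero => simp [Matrix.one_apply]
  | succ t ih =>
    simp_rw [pow_succ, Matrix.mul_apply]
    rw [Finset.sum_comm]
    simp_rw [← Finset.mul_sum, h, mul_one]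
    exact ih

lemma imh_aux_contract {n : ℕ} (P : Matrix (Fin n) (Fin n) ℝ) (q : Fin n → ℝ) (e : ℝ)
    (h : ∀ i, ∑ j, P i j = 1) (hq : ∑ j, q j = 1) (hst : ∀ j, ∑ i, q i * P i j = q j)
    (hmin : ∀ i j, q j * e ≤ P i j) (t : ℕ) (i : Fin n) :
    ∑ j, |(P ^ (t + 1)) i j - q j| ≤ (∑ j, |(P ^ t) i j - q j|) * (1 - e) := by
  have h0 : ∑ k, ((P ^ t) i k - q k) = 0 := by
    rw [Finset.sum_sub_distrib, imh_aux_pow_row P h, hq, sub_self]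
  have h1 : ∀ j, (P ^ (t + 1)) i j - q j = ∑ k, ((P ^ t) i k - q k) * (P k j - q j * e) := by
    intro j
    have : ∀ k, ((P ^ t) i k - q k) * (P k j - q j * e) =
        (P ^ t) i k * P k j - q k * P k j - ((P ^ t) i k - q k) * (q j * e) := fun k => by ring
    simp_rw [this]
    rw [Finset.sum_sub_distrib, Finset.sum_sub_distrib, hst, ← Finset.sum_mul, h0, zero_mul,
      sub_zero, pow_succ, Matrix.mul_apply]
  calc ∑ j, |(P ^ (t + 1)) i j - q j|
      ≤ ∑ j, ∑ k, |(P ^ t) i k - q k| * (P k j - q j * e) := by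
        refine Finset.sum_le_sum fun j _ => ?_
        rw [h1]
        refine (Finset.abs_sum_le_sum_abs _ _).trans (Finset.sum_le_sum fun k _ => ?_)
        rw [abs_mul, abs_of_nonneg (sub_nonneg.2 (hmin k j))]
    _ = _ := by
        rw [Finset.sum_comm, Finset.sum_mul]
        refine Finset.sum_congr rfl fun k _ => ?_
        rw [← Finset.mul_sum, Finset.sum_sub_distrib, h, ← Finset.sum_mul, hq, one_mul]

/-- for the IMH chain on `{1, …, m}` (here `Fin (m+2)`, state `1` being
index `0`) with `w₁ > 1`, every state `i` has convergence rate exactly `1 − 1/w₁`: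
`‖Pᵗ(i,·) − π‖_TV^{1/t} → 1 − 1/w₁` as `t → ∞`. -/
theorem imh_finite_every_point_rate (m : ℕ) (tgt prp : Fin (m + 2) → ℝ)
    (htgt_pos : ∀ i, 0 < tgt i) (hprp_pos : ∀ i, 0 < prp i)
    (htgt_sum : ∑ i, tgt i = 1) (hprp_sum : ∑ i, prp i = 1)
    (hmono : ∀ i j : Fin (m + 2), i ≤ j → tgt j / prp j ≤ tgt i / prp i)
    (hw : 1 < tgt 0 / prp 0) :
    ∀ i : Fin (m + 2),
      Filter.Tendsto (fun t : ℕ => (tvFin ((imhMatrix tgt prp ^ t) i) tgt) ^ ((t : ℝ)⁻¹))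
        Filter.atTop (nhds (1 - 1 / (tgt 0 / prp 0))) := by
  intro i
  have hP := imh_aux_apply tgt prp htgt_pos hprp_pos
  have hrow := imh_aux_row tgt prp htgt_pos hprp_pos hprp_sum
  have hst := imh_aux_stat tgt prp htgt_pos hprp_pos hprp_sum
  have hwpos : ∀ i, 0 < tgt i / prp i := fun i => div_pos (htgt_pos i) (hprp_pos i)
  have hw0 := hwpos 0
  have hr : 0 < 1 - 1 / (tgt 0 / prp 0) := by
    rw [sub_pos, div_lt_one hw0]; exact hw
  have he : tgt 0 * (1 / (tgt 0 / prp 0)) = prp 0 := by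
    have := (htgt_pos 0).ne'
    have := (hprp_pos 0).ne'
    field_simp
  have hmin : ∀ i j, tgt j * (1 / (tgt 0 / prp 0)) ≤ imhMatrix tgt prp i j := by
    intro i j
    have e1 : tgt j = prp j * (tgt j / prp j) := by
      have := (hprp_pos j).ne'
      field_simp
    have h2 : tgt j * (1 / (tgt 0 / prp 0)) ≤
        prp j * min 1 ((tgt j / prp j) / (tgt i / prp i)) := by
      conv_lhs => rw [e1]
      rw [mul_assoc, mul_one_div]
      refine mul_le_mul_of_nonneg_left (le_min ?_ ?_) (hprp_pos j).le
      · exact (div_le_one hw0).2 (hmono 0 j (Fin.zero_le j))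
      · exact div_le_div_of_nonneg_left (hwpos j).le (hwpos i) (hmono 0 i (Fin.zero_le i))
    rw [hP]
    refine h2.trans (le_add_of_nonneg_right ?_)
    split_ifs
    · exact Finset.sum_nonneg fun k _ => mul_nonneg (hprp_pos k).le (le_max_left _ _)
    · exact le_rfl
  -- the column of the state of maximal weight
  have hcol : ∀ k, imhMatrix tgt prp k 0 =
      prp 0 + if k = 0 then 1 - 1 / (tgt 0 / prp 0) else 0 := by
    intro k
    have h1 : 1 ≤ (tgt 0 / prp 0) / (tgt k / prp k) :=
      (one_le_div (hwpos k)).2 (hmono 0 k (Fin.zero_le k))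
    rw [hP, min_eq_left h1, mul_one]
    congr 1
    by_cases hk : k = 0
    · subst hk
      rw [if_pos rfl, if_pos rfl]
      have : ∀ k, prp k * max 0 (1 - (tgt k / prp k) / (tgt 0 / prp 0)) =
          prp k - tgt k * (1 / (tgt 0 / prp 0)) := by
        intro k
        rw [max_eq_right (sub_nonneg.2 ((div_le_one hw0).2 (hmono 0 k (Fin.zero_le k))))]
        have := (hprp_pos k).ne'
        have := (hprp_pos 0).ne'
        have := (htgt_pos 0).ne'
        field_simp
      simp_rw [this]
      rw [Finset.sum_sub_distrib, ← Finset.sum_mul, hprp_sum, htgt_sum, one_mul]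
    · rw [if_neg hk, if_neg (Ne.symm hk)]
  generalize he' : 1 / (tgt 0 / prp 0) = e at *
  have hlow : ∀ t : ℕ, (imhMatrix tgt prp ^ t) i 0 - tgt 0 =
      ((if i = 0 then 1 else 0) - tgt 0) * (1 - e) ^ t := by
    intro t
    induction t with
    | zero => simp [Matrix.one_apply]
    | succ t ih =>
      rw [pow_succ, Matrix.mul_apply]
      simp_rw [hcol, mul_add]
      rw [Finset.sum_add_distrib, ← Finset.sum_mul, imh_aux_pow_row _ hrow]
      simp only [mul_ite, mul_zero, Finset.sum_ite_eq', Finset.mem_univ, if_true]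
      rw [pow_succ, ← mul_assoc, ← ih, ← he]
      ring
  have hlt : tgt 0 < 1 := by
    rw [← htgt_sum]
    exact Finset.single_lt_sum (i := 0) (j := 1) (by simp) (Finset.mem_univ _)
      (Finset.mem_univ _) (htgt_pos 1) (fun k _ _ => (htgt_pos k).le)
  have hd : 0 < |(if i = 0 then (1 : ℝ) else 0) - tgt 0| := by
    rw [abs_pos]
    have := htgt_pos 0
    split_ifs <;> linarith
  set c := |(if i = 0 then (1 : ℝ) else 0) - tgt 0| with hc
  have hL : ∀ t : ℕ, (1 / 2 * c) * (1 - e) ^ t ≤ tvFin ((imhMatrix tgt prp ^ t) i) tgt := by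
    intro t
    unfold tvFin
    rw [mul_assoc]
    refine mul_le_mul_of_nonneg_left ?_ (by norm_num)
    have h3 := Finset.single_le_sum (f := fun j => |(imhMatrix tgt prp ^ t) i j - tgt j|)
      (fun j _ => abs_nonneg _) (Finset.mem_univ (0 : Fin (m + 2)))
    refine le_trans (le_of_eq ?_) h3
    rw [hlow, abs_mul, abs_of_nonneg (pow_nonneg hr.le t)]
  have hU : ∀ t : ℕ, tvFin ((imhMatrix tgt prp ^ t) i) tgt ≤
      tvFin ((imhMatrix tgt prp ^ 0) i) tgt * (1 - e) ^ t := by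
    intro t
    induction t with
    | zero => simp
    | succ t ih =>
      have h4 := imh_aux_contract _ tgt e hrow htgt_sum hst hmin t i
      have h5 : tvFin ((imhMatrix tgt prp ^ (t + 1)) i) tgt ≤
          tvFin ((imhMatrix tgt prp ^ t) i) tgt * (1 - e) := by
        unfold tvFin; linarith
      rw [pow_succ (1 - e), ← mul_assoc]
      exact h5.trans (mul_le_mul_of_nonneg_right ih hr.le)
  have hC : 0 < tvFin ((imhMatrix tgt prp ^ 0) i) tgt := by
    have := hL 0
    rw [pow_zero (1 - e), mul_one] at this
    linarith
  refine tendsto_of_tendsto_of_tendsto_of_le_of_le (imh_aux_rpow (1 / 2 * c) (1 - e) (by positivity) hr)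
    (imh_aux_rpow _ (1 - e) hC hr) (fun t => ?_) (fun t => ?_)
  · exact Real.rpow_le_rpow (by positivity) (hL t) (by positivity)
  · exact Real.rpow_le_rpow (le_trans (by positivity) (hL t)) (hU t) (by positivity)
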